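/- arXiv:1112.1346 — 2 statements merged into one kernel-verified Lean document; each statement's English description precedes it below -/
import Mathlib

section
/- Let h be a bilinear form on an n-dimensional real inner product space (V,g) and let 0 ≤ q ≤ n and 1 ≤ r ≤ n−q. Then: (i) *((h−λg)^{n−r}/(n−r)!) = Σ_{m=0}^{n−r} (−1)^{n−m−r} s_{(r,m)}(h) λ^{n−m−r} for all λ ∈ ℝ (an identity of (r,r)-double forms); (ii) if moreover q+r ≤ n, then ((q+r)!/q!)·s_{q+r}(h) = ⟨s_{(r,q)}(h), h^r⟩; (iii) c(s_{(r,q)}(h)) = (n−q−r+1)·s_{(r−1,q)}(h). -/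
noncomputable section

open Finset

/-- Double forms over an `n`-dimensional real inner product space, described by their
coefficients in a fixed orthonormal basis: a `(p,q)`-double form corresponds to a function
supported on pairs of subsets of cardinalities `p` and `q`. -/
abbrev DForm (n : ℕ) := Finset (Fin n) → Finset (Fin n) → ℝ

namespace DForm

variable {n : ℕ}

/-- Sign of the shuffle placing the elements of `A` (in increasing order) before
those of `B` (in increasing order). -/
def shuffleSign (A B : Finset (Fin n)) : ℝ :=
  (-1 : ℝ) ^ (∑ x ∈ B, (A.filter fun a => x < a).card)

/-- The exterior product of double forms. -/
def wedge (ω₁ ω₂ : DForm n) : DForm n := fun I J =>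
  ∑ A ∈ I.powerset, ∑ B ∈ J.powerset,
    shuffleSign A (I \ A) * shuffleSign B (J \ B) * ω₁ A B * ω₂ (I \ A) (J \ B)

/-- Exterior powers `ω^k` of a double form. -/
def dpow (ω : DForm n) : ℕ → DForm n
  | 0 => fun I J => if I = ∅ ∧ J = ∅ then 1 else 0
  | k + 1 => wedge ω (dpow ω k)

/-- The double Hodge star operator. -/
def hstar (ω : DForm n) : DForm n := fun I J =>
  shuffleSign Iᶜ I * shuffleSign Jᶜ J * ω Iᶜ Jᶜ

/-- The contraction `c` of double forms. -/
def contr (ω : DForm n) : DForm n := fun I J =>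
  ∑ j : Fin n,
    if j ∈ I ∨ j ∈ J then 0
    else shuffleSign {j} I * shuffleSign {j} J * ω (insert j I) (insert j J)

/-- Iterated contraction `c^k`. -/
def citer (ω : DForm n) : ℕ → DForm n
  | 0 => ω
  | k + 1 => contr (citer ω k)

/-- The inner product of double forms. -/
def dinner (ω₁ ω₂ : DForm n) : ℝ :=
  ∑ I : Finset (Fin n), ∑ J : Finset (Fin n), ω₁ I J * ω₂ I J

/-- The transpose `ω^t` of a double form. -/
def transp (ω : DForm n) : DForm n := fun I J => ω J I

/-- The composition (Greub) product `ω₁ ∘ ω₂` of double forms. -/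
def comp (ω₁ ω₂ : DForm n) : DForm n := fun I J =>
  ∑ K : Finset (Fin n), ω₂ I K * ω₁ K J

/-- The scalar value of a `(0,0)`-double form. -/
def toScalar (ω : DForm n) : ℝ := ω ∅ ∅

/-- The metric, as a `(1,1)`-double form. -/
def gMetric (n : ℕ) : DForm n := fun I J => if I = J ∧ I.card = 1 then 1 else 0

/-- Iterated composition power `ω^{∘r}` of a `(1,1)`-double form, with `ω^{∘0} = g`. -/
def cpow (ω : DForm n) : ℕ → DForm n
  | 0 => gMetric n
  | r + 1 => comp ω (cpow ω r)

/-- The `(1,1)`-double form associated to a bilinear form, given by its matrix in the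
orthonormal basis. -/
def ofMatrix (h : Matrix (Fin n) (Fin n) ℝ) : DForm n := fun I J =>
  ∑ i : Fin n, ∑ j : Fin n, if I = {i} ∧ J = {j} then h i j else 0

/-- `ω` is a `(p,q)`-double form. -/
def IsOfDeg (ω : DForm n) (p q : ℕ) : Prop :=
  ∀ I J : Finset (Fin n), ω I J ≠ 0 → I.card = p ∧ J.card = q

/-- `ω` is a symmetric double form. -/
def IsSym (ω : DForm n) : Prop := ∀ I J, ω I J = ω J I

/-- The sign relating `e_{v 0} ∧ ⋯ ∧ e_{v (p-1)}` to the corresponding increasing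
basis `p`-vector (and `0` if the indices are not pairwise distinct). -/
def tupleSign {p : ℕ} (v : Fin p → Fin n) : ℝ :=
  if Function.Injective v then (((Equiv.Perm.sign (Tuple.sort v)) : ℤ) : ℝ) else 0

/-- Evaluation of a double form on wedges of basis vectors indexed by arbitrary tuples. -/
def evalT (ω : DForm n) {p q : ℕ} (v : Fin p → Fin n) (w : Fin q → Fin n) : ℝ :=
  tupleSign v * tupleSign w * ω (Finset.image v Finset.univ) (Finset.image w Finset.univ)

/-- The first Bianchi identity for a `(2,2)`-double form:
`R(x∧y,z∧t) + R(y∧z,x∧t) + R(z∧x,y∧t) = 0`. -/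
def Bianchi2 (R : DForm n) : Prop :=
  ∀ x y z t : Fin n,
    evalT R ![x, y] ![z, t] + evalT R ![y, z] ![x, t] + evalT R ![z, x] ![y, t] = 0

/-- The first Bianchi identity for a `(p,p)`-double form. -/
def FirstBianchi (ω : DForm n) (p : ℕ) : Prop :=
  ∀ (x : Fin (p + 1) → Fin n) (y : Fin (p - 1) → Fin n),
    ∑ j : Fin (p + 1),
      (-1 : ℝ) ^ (j : ℕ) * evalT ω (x ∘ Fin.succAbove j) (Fin.cons (x j) y) = 0

/-- The characteristic coefficient `s_k(h)` of a bilinear form `h`, defined through the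
characteristic polynomial: `det(h - λ g) = ∑ (-1)^(n-i) s_i(h) λ^(n-i)`. -/
def sInv (h : Matrix (Fin n) (Fin n) ℝ) (k : ℕ) : ℝ :=
  (-1 : ℝ) ^ k * (Matrix.charpoly h).coeff (n - k)

/-- The `k`-th cofactor (Newton) transformation `t_k(h) = (1/(k!(n-1-k)!)) *(g^{n-1-k} h^k)`. -/
def tInv (h : Matrix (Fin n) (Fin n) ℝ) (k : ℕ) : DForm n :=
  ((k.factorial * (n - 1 - k).factorial : ℕ) : ℝ)⁻¹ •
    hstar (wedge (dpow (gMetric n) (n - 1 - k)) (dpow (ofMatrix h) k))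

/-- The `(r,q)`-cofactor `s_{(r,q)}(h) = (1/(q!(n-q-r)!)) *(g^{n-q-r} h^q)`. -/
def sCof (h : Matrix (Fin n) (Fin n) ℝ) (r q : ℕ) : DForm n :=
  ((q.factorial * (n - q - r).factorial : ℕ) : ℝ)⁻¹ •
    hstar (wedge (dpow (gMetric n) (n - q - r)) (dpow (ofMatrix h) q))

end DForm

namespace DForm

variable {n : ℕ}

theorem sS_eq_prod (A B : Finset (Fin n)) :
    shuffleSign A B = ∏ x ∈ B, ∏ a ∈ A, (if x < a then (-1 : ℝ) else 1) := by
  unfold shuffleSign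
  rw [← Finset.prod_pow_eq_pow_sum]
  refine Finset.prod_congr rfl fun x _ => ?_
  rw [Finset.prod_ite]
  simp

theorem sS_union_left {A A' : Finset (Fin n)} (hd : Disjoint A A') (B : Finset (Fin n)) :
    shuffleSign (A ∪ A') B = shuffleSign A B * shuffleSign A' B := by
  simp only [sS_eq_prod, Finset.prod_union hd, Finset.prod_mul_distrib]

theorem sS_union_right (A : Finset (Fin n)) {B B' : Finset (Fin n)} (hd : Disjoint B B') :
    shuffleSign A (B ∪ B') = shuffleSign A B * shuffleSign A B' := by
  simp only [sS_eq_prod, Finset.prod_union hd]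

theorem sS_swap {A B : Finset (Fin n)} (hd : Disjoint A B) :
    shuffleSign A B = (-1 : ℝ) ^ (A.card * B.card) * shuffleSign B A := by
  simp only [sS_eq_prod]
  rw [Finset.prod_comm (s := A)]
  have : (-1 : ℝ) ^ (A.card * B.card) = ∏ x ∈ B, ∏ a ∈ A, (-1 : ℝ) := by
    simp [pow_mul]
  rw [this]
  simp only [← Finset.prod_mul_distrib]
  refine Finset.prod_congr rfl fun x hx => Finset.prod_congr rfl fun a ha => ?_
  have hne : a ≠ x := fun h => Finset.disjoint_left.1 hd ha (h ▸ hx)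
  rcases lt_or_gt_of_ne hne with h1 | h1
  · simp [h1, not_lt.2 h1.le]
  · simp [h1, not_lt.2 h1.le]

theorem sS_empty_right (A : Finset (Fin n)) : shuffleSign A ∅ = 1 := by
  simp [shuffleSign]

theorem sS_empty_left (A : Finset (Fin n)) : shuffleSign ∅ A = 1 := by
  simp [shuffleSign]

theorem sum_three (I : Finset (Fin n)) (f : Finset (Fin n) → Finset (Fin n) → Finset (Fin n) → ℝ) :
    ∑ A ∈ I.powerset, ∑ B ∈ A.powerset, f B (A \ B) (I \ A) =
    ∑ B ∈ I.powerset, ∑ C ∈ (I \ B).powerset, f B C ((I \ B) \ C) := by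
  rw [Finset.sum_sigma', Finset.sum_sigma']
  refine Finset.sum_nbij' (fun x => ⟨x.2, x.1 \ x.2⟩) (fun x => ⟨x.1 ∪ x.2, x.1⟩) ?_ ?_ ?_ ?_ ?_
  · rintro ⟨A, B⟩ h
    simp only [Finset.mem_sigma, Finset.mem_powerset] at h ⊢
    exact ⟨h.2.trans h.1, Finset.sdiff_subset_sdiff h.1 le_rfl⟩
  · rintro ⟨A, B⟩ h
    simp only [Finset.mem_sigma, Finset.mem_powerset] at h ⊢
    exact ⟨Finset.union_subset h.1 (h.2.trans Finset.sdiff_subset), Finset.subset_union_left⟩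
  · rintro ⟨A, B⟩ h
    simp only [Finset.mem_sigma, Finset.mem_powerset] at h ⊢
    rw [Finset.union_sdiff_of_subset h.2]
  · rintro ⟨A, B⟩ h
    simp only [Finset.mem_sigma, Finset.mem_powerset] at h ⊢
    have hd : Disjoint B A := (Finset.disjoint_of_subset_left h.2 Finset.sdiff_disjoint)
    rw [Finset.union_sdiff_cancel_left hd.symm]
  · rintro ⟨A, B⟩ h
    simp only [Finset.mem_sigma, Finset.mem_powerset] at h ⊢
    congr 1
    ext x
    simp only [Finset.mem_sdiff]
    have := @h.2 x
    tauto

theorem sum_swap2 (I : Finset (Fin n)) (f : Finset (Fin n) → Finset (Fin n) → ℝ) :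
    ∑ A ∈ I.powerset, f A (I \ A) = ∑ A ∈ I.powerset, f (I \ A) A := by
  refine Finset.sum_nbij' (fun x => I \ x) (fun x => I \ x) ?_ ?_ ?_ ?_ ?_
  · intro a h; simp
  · intro a h; simp
  · intro a h
    exact Finset.sdiff_sdiff_eq_self (Finset.mem_powerset.1 h)
  · intro a h
    exact Finset.sdiff_sdiff_eq_self (Finset.mem_powerset.1 h)
  · intro a h
    rw [Finset.sdiff_sdiff_eq_self (Finset.mem_powerset.1 h)]

theorem sS_three {A B I : Finset (Fin n)} (hB : B ⊆ A) (hA : A ⊆ I) :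
    shuffleSign A (I \ A) * shuffleSign B (A \ B) =
      shuffleSign B (A \ B) * shuffleSign B (I \ A) * shuffleSign (A \ B) (I \ A) := by
  have : shuffleSign A (I \ A) = shuffleSign B (I \ A) * shuffleSign (A \ B) (I \ A) := by
    rw [← sS_union_left Finset.disjoint_sdiff, Finset.union_sdiff_of_subset hB]
  rw [this]; ring

theorem sS_three' {B C I : Finset (Fin n)} (hC : C ⊆ I \ B) :
    shuffleSign B (I \ B) * shuffleSign C ((I \ B) \ C) =
      shuffleSign B C * shuffleSign B ((I \ B) \ C) * shuffleSign C ((I \ B) \ C) := by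
  have : shuffleSign B (I \ B) = shuffleSign B C * shuffleSign B ((I \ B) \ C) := by
    rw [← sS_union_right _ Finset.disjoint_sdiff, Finset.union_sdiff_of_subset hC]
  rw [this]

theorem wedge_assoc (a b c : DForm n) : wedge (wedge a b) c = wedge a (wedge b c) := by
  funext I J
  let F : Finset (Fin n) → Finset (Fin n) → Finset (Fin n) → ℝ := fun A B C =>
    shuffleSign A B * shuffleSign A C * shuffleSign B C
  have h1 : wedge (wedge a b) c I J =
      ∑ A ∈ I.powerset, ∑ A' ∈ A.powerset, ∑ B ∈ J.powerset, ∑ B' ∈ B.powerset,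
        F A' (A \ A') (I \ A) * F B' (B \ B') (J \ B) *
          (a A' B' * b (A \ A') (B \ B') * c (I \ A) (J \ B)) := by
    simp only [wedge, Finset.mul_sum, Finset.sum_mul]
    refine Finset.sum_congr rfl fun A hA => ?_
    rw [Finset.sum_comm]
    refine Finset.sum_congr rfl fun A' hA' => ?_
    refine Finset.sum_congr rfl fun B hB => ?_
    refine Finset.sum_congr rfl fun B' hB' => ?_
    simp only [Finset.mem_powerset] at *
    simp only [F]
    rw [← sS_three hA' hA, ← sS_three hB' hB]
    ring
  have h2 : wedge a (wedge b c) I J =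
      ∑ A ∈ I.powerset, ∑ A' ∈ (I \ A).powerset, ∑ B ∈ J.powerset, ∑ B' ∈ (J \ B).powerset,
        F A A' ((I \ A) \ A') * F B B' ((J \ B) \ B') *
          (a A B * b A' B' * c ((I \ A) \ A') ((J \ B) \ B')) := by
    simp only [wedge, Finset.mul_sum, Finset.sum_mul]
    refine Finset.sum_congr rfl fun A hA => ?_
    rw [Finset.sum_comm]
    refine Finset.sum_congr rfl fun A' hA' => ?_
    refine Finset.sum_congr rfl fun B hB => ?_
    refine Finset.sum_congr rfl fun B' hB' => ?_
    simp only [Finset.mem_powerset] at *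
    simp only [F]
    rw [← sS_three' hA', ← sS_three' hB']
    ring
  rw [h1, h2]
  rw [← sum_three I (fun A A' A'' => ∑ B ∈ J.powerset, ∑ B' ∈ (J \ B).powerset,
        F A A' A'' * F B B' ((J \ B) \ B') *
          (a A B * b A' B' * c A'' ((J \ B) \ B')))]
  refine Finset.sum_congr rfl fun A hA => ?_
  refine Finset.sum_congr rfl fun A' hA' => ?_
  exact sum_three J (fun B B' B'' => F A' (A \ A') (I \ A) * F B B' B'' *
          (a A' B * b (A \ A') B' * c (I \ A) B''))

/-- Balanced forms: supported on pairs of subsets of equal cardinality. -/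
def Bal (ω : DForm n) : Prop := ∀ I J, ω I J ≠ 0 → I.card = J.card

theorem wedge_comm' {a b : DForm n} (ha : Bal a) (hb : Bal b) : wedge a b = wedge b a := by
  funext I J
  unfold wedge
  rw [sum_swap2 I (fun A A' => ∑ B ∈ J.powerset,
    shuffleSign A A' * shuffleSign B (J \ B) * a A B * b A' (J \ B))]
  refine Finset.sum_congr rfl fun A hA => ?_
  rw [sum_swap2 J (fun B B' =>
    shuffleSign (I \ A) A * shuffleSign B B' * a (I \ A) B * b A B')]
  refine Finset.sum_congr rfl fun B hB => ?_
  by_cases h1 : a (I \ A) (J \ B) = 0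
  · simp [h1]
  by_cases h2 : b A B = 0
  · simp [h2]
  have e1 := ha _ _ h1
  have e2 := hb _ _ h2
  rw [sS_swap (Finset.sdiff_disjoint (s := A) (t := I)),
    sS_swap (Finset.sdiff_disjoint (s := B) (t := J)), e1, e2]
  have : (-1 : ℝ) ^ ((J \ B).card * B.card) * (-1 : ℝ) ^ ((J \ B).card * B.card) = 1 := by
    rw [← mul_pow]; simp
  linear_combination (shuffleSign A (I \ A) * shuffleSign B (J \ B) * a (I \ A) (J \ B) * b A B) * this

theorem Bal.wedge {a b : DForm n} (ha : Bal a) (hb : Bal b) : Bal (wedge a b) := by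
  intro I J h
  obtain ⟨A, hA, h⟩ := Finset.exists_ne_zero_of_sum_ne_zero h
  obtain ⟨B, hB, h⟩ := Finset.exists_ne_zero_of_sum_ne_zero h
  rw [Finset.mem_powerset] at hA hB
  have h2 := hb _ _ (right_ne_zero_of_mul h)
  have h1 := ha _ _ (right_ne_zero_of_mul (left_ne_zero_of_mul h))
  have := Finset.card_sdiff_add_card_eq_card hA
  have := Finset.card_sdiff_add_card_eq_card hB
  omega

theorem bal_ofMatrix (h : Matrix (Fin n) (Fin n) ℝ) : Bal (ofMatrix h) := by
  intro I J hh
  obtain ⟨i, _, hh⟩ := Finset.exists_ne_zero_of_sum_ne_zero hh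
  obtain ⟨j, _, hh⟩ := Finset.exists_ne_zero_of_sum_ne_zero hh
  have : I = {i} ∧ J = {j} := by
    by_contra hc
    simp [hc] at hh
  simp [this.1, this.2]

theorem bal_dpow {a : DForm n} (ha : Bal a) (k : ℕ) : Bal (dpow a k) := by
  induction k with
  | zero =>
    intro I J h
    have : I = ∅ ∧ J = ∅ := by
      by_contra hc
      simp [dpow, hc] at h
    simp [this.1, this.2]
  | succ k ih => exact ha.wedge ih

/-- Left multiplication. -/
def Lm (a : DForm n) : Module.End ℝ (DForm n) where
  toFun := wedge a
  map_add' b c := by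
    funext I J
    simp only [wedge, Pi.add_apply, mul_add, Finset.sum_add_distrib]
  map_smul' t b := by
    funext I J
    simp only [wedge, Pi.smul_apply, smul_eq_mul, RingHom.id_apply, Finset.mul_sum]
    refine Finset.sum_congr rfl fun A hA => Finset.sum_congr rfl fun B hB => ?_
    ring

theorem Lm_apply (a b : DForm n) : Lm a b = wedge a b := rfl

theorem Lm_wedge (a b : DForm n) : Lm (wedge a b) = Lm a * Lm b := by
  refine LinearMap.ext fun c => ?_
  exact wedge_assoc a b c

theorem dpow_eq (a : DForm n) (k : ℕ) : dpow a k = (Lm a ^ k) (dpow a 0) := by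
  induction k with
  | zero => rfl
  | succ k ih =>
    rw [pow_succ', Module.End.mul_apply, ← ih]; rfl

theorem Lm_one (a : DForm n) : Lm (dpow a 0) = 1 := by
  refine LinearMap.ext fun c => ?_
  funext I J
  simp only [Lm_apply, wedge, Module.End.one_apply]
  rw [Finset.sum_eq_single ∅, Finset.sum_eq_single ∅]
  · simp [dpow, sS_empty_left]
  · intro B _ hB; simp [dpow, hB]
  · simp
  · intro A _ hA; simp [dpow, hA]
  · simp

theorem Lm_dpow (a : DForm n) (k : ℕ) : Lm (dpow a k) = Lm a ^ k := by
  induction k with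
  | zero => rw [Lm_one, pow_zero]
  | succ k ih =>
    rw [pow_succ', ← ih, ← Lm_wedge]; rfl

theorem wedge_dpow_dpow (a b : DForm n) (k l : ℕ) :
    wedge (dpow a k) (dpow b l) = (Lm a ^ k * Lm b ^ l) (dpow b 0) := by
  rw [← Lm_apply, Lm_dpow, dpow_eq b l, Module.End.mul_apply]

theorem dpow_zero_eq (a b : DForm n) : dpow a 0 = dpow b 0 := rfl

theorem gMetric_eq : gMetric n = ofMatrix (1 : Matrix (Fin n) (Fin n) ℝ) := by
  funext I J
  unfold gMetric ofMatrix
  by_cases h : I = J ∧ I.card = 1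
  · obtain ⟨rfl, h⟩ := h
    obtain ⟨i, rfl⟩ := Finset.card_eq_one.1 h
    rw [Finset.sum_eq_single i, Finset.sum_eq_single i]
    · simp
    · intro j _ hj; simp [hj.symm]
    · simp
    · intro j _ hj; simp [hj.symm]
    · simp
  · rw [if_neg h]
    symm
    refine Finset.sum_eq_zero fun i _ => Finset.sum_eq_zero fun j _ => ?_
    split_ifs with h1
    · obtain ⟨rfl, rfl⟩ := h1
      refine Matrix.one_apply_ne ?_
      rintro rfl
      simp at h
    · rfl

theorem wedge_ofMatrix (h : Matrix (Fin n) (Fin n) ℝ) (ω : DForm n) (I J : Finset (Fin n)) :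
    wedge (ofMatrix h) ω I J = ∑ i ∈ I, ∑ j ∈ J,
      shuffleSign {i} (I \ {i}) * shuffleSign {j} (J \ {j}) * h i j * ω (I \ {i}) (J \ {j}) := by
  have h1 : ∀ A B, ofMatrix h A B * 1 =
      ∑ i : Fin n, ∑ j : Fin n, if A = {i} then (if B = {j} then h i j else 0) else 0 := by
    intro A B
    rw [mul_one]
    unfold ofMatrix
    simp only [ite_and]
  have h2 : wedge (ofMatrix h) ω I J = ∑ i : Fin n, ∑ j : Fin n, ∑ A ∈ I.powerset,
      ∑ B ∈ J.powerset, if A = {i} then (if B = {j} then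
       shuffleSign A (I \ A) * shuffleSign B (J \ B) * h i j * ω (I \ A) (J \ B) else 0) else 0 := by
    unfold wedge
    have : ∀ A B, shuffleSign A (I \ A) * shuffleSign B (J \ B) * ofMatrix h A B * ω (I \ A) (J \ B)
        = ∑ i : Fin n, ∑ j : Fin n, if A = {i} then (if B = {j} then
       shuffleSign A (I \ A) * shuffleSign B (J \ B) * h i j * ω (I \ A) (J \ B) else 0) else 0 := by
      intro A B
      rw [← mul_one (ofMatrix h A B), h1]
      simp only [Finset.mul_sum, Finset.sum_mul]
      refine Finset.sum_congr rfl fun A hA => Finset.sum_congr rfl fun B hB => ?_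
      split_ifs <;> simp
    simp only [this]
    rw [Finset.sum_congr rfl fun A _ => Finset.sum_comm]
    rw [Finset.sum_comm]
    refine Finset.sum_congr rfl fun i _ => ?_
    rw [Finset.sum_congr rfl fun A _ => Finset.sum_comm]
    rw [Finset.sum_comm]
  rw [h2]
  have h3 : ∀ i j : Fin n, (∑ A ∈ I.powerset,
      ∑ B ∈ J.powerset, if A = {i} then (if B = {j} then
       shuffleSign A (I \ A) * shuffleSign B (J \ B) * h i j * ω (I \ A) (J \ B) else 0) else 0) =
      if i ∈ I then if j ∈ J then shuffleSign {i} (I \ {i}) * shuffleSign {j} (J \ {j}) * h i j *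
        ω (I \ {i}) (J \ {j}) else 0 else 0 := by
    intro i j
    rw [Finset.sum_comm]
    simp [Finset.sum_ite_eq']
  simp only [h3]
  have h4 : ∀ i : Fin n, (∑ j : Fin n, if i ∈ I then if j ∈ J then
      shuffleSign {i} (I \ {i}) * shuffleSign {j} (J \ {j}) * h i j *
        ω (I \ {i}) (J \ {j}) else 0 else 0) = if i ∈ I then ∑ j ∈ J,
      shuffleSign {i} (I \ {i}) * shuffleSign {j} (J \ {j}) * h i j *
        ω (I \ {i}) (J \ {j}) else 0 := by
    intro i
    by_cases hi : i ∈ I <;> simp [hi]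
  simp only [h4]
  simp

theorem ofMatrix_sub_smul (h : Matrix (Fin n) (Fin n) ℝ) (t : ℝ) :
    Lm (ofMatrix (h - t • 1)) = Lm (ofMatrix h) + (-t) • Lm (gMetric n) := by
  refine LinearMap.ext fun ω => ?_
  funext I J
  rw [gMetric_eq]
  simp only [LinearMap.add_apply, LinearMap.smul_apply, Lm_apply, Pi.add_apply, Pi.smul_apply,
    wedge_ofMatrix, smul_eq_mul, Finset.mul_sum, ← Finset.sum_add_distrib]
  refine Finset.sum_congr rfl fun i _ => Finset.sum_congr rfl fun j _ => ?_
  simp only [Matrix.sub_apply, Matrix.smul_apply, smul_eq_mul]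
  ring

theorem comm_gh (h : Matrix (Fin n) (Fin n) ℝ) : Commute (Lm (ofMatrix h)) (Lm (gMetric n)) := by
  unfold Commute SemiconjBy
  rw [gMetric_eq, ← Lm_wedge, ← Lm_wedge, wedge_comm' (bal_ofMatrix _) (bal_ofMatrix _)]

/-- Linear hodge star. -/
theorem hstar_sum {ι : Type*} (s : Finset ι) (f : ι → DForm n) :
    hstar (∑ i ∈ s, f i) = ∑ i ∈ s, hstar (f i) := by
  funext I J
  simp [hstar, Finset.sum_apply, Finset.mul_sum]

theorem hstar_smul (t : ℝ) (f : DForm n) : hstar (t • f) = t • hstar f := by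
  funext I J
  simp [hstar]; ring

theorem part_i (h : Matrix (Fin n) (Fin n) ℝ) (r : ℕ) (hr : r ≤ n) (lam : ℝ) :
      (((n - r).factorial : ℕ) : ℝ)⁻¹ • hstar (dpow (ofMatrix (h - lam • 1)) (n - r)) =
        ∑ m ∈ Finset.range (n - r + 1),
          ((-1 : ℝ) ^ (n - m - r) * lam ^ (n - m - r)) • sCof h r m := by
  rw [dpow_eq, ofMatrix_sub_smul, ((comm_gh h).smul_right (-lam)).add_pow, LinearMap.sum_apply,
    hstar_sum, Finset.smul_sum]
  refine Finset.sum_congr rfl fun m hm => ?_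
  have hm : m ≤ n - r := by simpa [Nat.lt_succ_iff] using hm
  unfold sCof
  have e : n - m - r = n - r - m := by omega
  rw [e, wedge_dpow_dpow, smul_pow]
  have : (Lm (ofMatrix h) ^ m * (-lam) ^ (n - r - m) • Lm (gMetric n) ^ (n - r - m) *
      (((n - r).choose m : ℕ) : Module.End ℝ (DForm n))) =
      ((-lam) ^ (n - r - m) * ((n - r).choose m : ℝ)) •
        (Lm (gMetric n) ^ (n - r - m) * Lm (ofMatrix h) ^ m) := by
    rw [← ((comm_gh h).pow_pow m (n - r - m)).eq, mul_smul_comm, smul_mul_assoc, mul_smul]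
    congr 1
    rw [← Nat.cast_comm, ← nsmul_eq_mul, Nat.cast_smul_eq_nsmul]
  rw [this, LinearMap.smul_apply, hstar_smul, smul_smul, smul_smul,
    dpow_zero_eq _ (ofMatrix h)]
  congr 1
  rw [← mul_pow, Nat.cast_choose ℝ hm]
  have := Nat.factorial_ne_zero (n - r)
  push_cast
  field_simp

theorem dinner_hstar (a b : DForm n) : dinner (hstar a) b = wedge a b univ univ := by
  unfold dinner wedge hstar
  rw [Finset.powerset_univ]
  rw [← Equiv.sum_comp (Equiv.mk compl compl compl_compl compl_compl : Finset (Fin n) ≃ Finset (Fin n))]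
  refine Finset.sum_congr rfl fun A hA => ?_
  rw [← Equiv.sum_comp (Equiv.mk compl compl compl_compl compl_compl : Finset (Fin n) ≃ Finset (Fin n))]
  refine Finset.sum_congr rfl fun B hB => ?_
  simp [← Finset.compl_eq_univ_sdiff]

theorem sS_orderEmb {k : ℕ} (I : Finset (Fin n)) (hI : I.card = k + 1) (p : Fin (k + 1)) :
    shuffleSign {I.orderEmbOfFin hI p} (I \ {I.orderEmbOfFin hI p}) = (-1 : ℝ) ^ (p : ℕ) := by
  unfold shuffleSign
  congr 1
  have : ∀ x, (({I.orderEmbOfFin hI p} : Finset (Fin n)).filter fun a => x < a).card =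
      if x < I.orderEmbOfFin hI p then 1 else 0 := by
    intro x
    rw [Finset.filter_singleton]
    split_ifs <;> simp
  simp only [this]
  rw [← Finset.card_filter]
  have : (I \ {I.orderEmbOfFin hI p}).filter (fun x => x < I.orderEmbOfFin hI p) =
      (Finset.Iio p).map (I.orderEmbOfFin hI).toEmbedding := by
    ext x
    simp only [Finset.mem_filter, Finset.mem_sdiff, Finset.mem_singleton, Finset.mem_map,
      Finset.mem_Iio, RelEmbedding.coe_toEmbedding]
    constructor
    · rintro ⟨⟨hx, _⟩, hlt⟩
      have : x ∈ Set.range (I.orderEmbOfFin hI) := by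
        rw [Finset.range_orderEmbOfFin]; exact hx
      obtain ⟨y, rfl⟩ := this
      exact ⟨y, (OrderEmbedding.lt_iff_lt _).1 hlt, rfl⟩
    · rintro ⟨y, hy, rfl⟩
      have := (OrderEmbedding.lt_iff_lt (I.orderEmbOfFin hI)).2 hy
      exact ⟨⟨Finset.orderEmbOfFin_mem _ _ _, this.ne⟩, this⟩
  rw [this, Finset.card_map, Fin.card_Iio]

theorem card_sd {k : ℕ} (I : Finset (Fin n)) (hI : I.card = k + 1) (p : Fin (k + 1)) :
    (I \ {I.orderEmbOfFin hI p}).card = k := by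
  rw [Finset.sdiff_singleton_eq_erase, Finset.card_erase_of_mem (Finset.orderEmbOfFin_mem _ _ _), hI]
  rfl

theorem orderEmb_sd {k : ℕ} (I : Finset (Fin n)) (hI : I.card = k + 1) (p : Fin (k + 1)) :
    ⇑((I \ {I.orderEmbOfFin hI p}).orderEmbOfFin (card_sd I hI p)) =
      (I.orderEmbOfFin hI) ∘ p.succAbove := by
  symm
  apply Finset.orderEmbOfFin_unique
  · intro x
    simp only [Finset.mem_sdiff, Finset.mem_singleton, Function.comp]
    refine ⟨Finset.orderEmbOfFin_mem _ _ _, ?_⟩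
    intro hh
    exact Fin.succAbove_ne p x ((I.orderEmbOfFin hI).injective hh)
  · exact (I.orderEmbOfFin hI).strictMono.comp (Fin.strictMono_succAbove p)

theorem sum_orderEmb {k : ℕ} (I : Finset (Fin n)) (hI : I.card = k) (f : Fin n → ℝ) :
    ∑ i ∈ I, f i = ∑ p : Fin k, f (I.orderEmbOfFin hI p) := by
  have : I = Finset.univ.map (I.orderEmbOfFin hI).toEmbedding := by
    ext x
    have := Finset.range_orderEmbOfFin I hI
    have := Set.ext_iff.1 this x
    simp at this ⊢
  conv_lhs => rw [this]
  rw [Finset.sum_map]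
  rfl

theorem dpow_det (h : Matrix (Fin n) (Fin n) ℝ) (k : ℕ) : ∀ (I J : Finset (Fin n))
    (hI : I.card = k) (hJ : J.card = k), dpow (ofMatrix h) k I J =
      (k.factorial : ℝ) * (h.submatrix (I.orderEmbOfFin hI) (J.orderEmbOfFin hJ)).det := by
  induction k with
  | zero =>
    intro I J hI hJ
    rw [Finset.card_eq_zero] at hI hJ
    simp [dpow, hI, hJ]
  | succ k ih =>
    intro I J hI hJ
    show wedge (ofMatrix h) (dpow (ofMatrix h) k) I J = _
    rw [wedge_ofMatrix, sum_orderEmb I hI]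
    have : ∀ p : Fin (k + 1), (∑ j ∈ J, shuffleSign {I.orderEmbOfFin hI p} (I \ {I.orderEmbOfFin hI p})
        * shuffleSign {j} (J \ {j}) * h (I.orderEmbOfFin hI p) j *
          dpow (ofMatrix h) k (I \ {I.orderEmbOfFin hI p}) (J \ {j})) =
        (k.factorial : ℝ) * (h.submatrix (I.orderEmbOfFin hI) (J.orderEmbOfFin hJ)).det := by
      intro p
      rw [sum_orderEmb J hJ, Matrix.det_succ_row _ p, Finset.mul_sum]
      refine Finset.sum_congr rfl fun l _ => ?_
      rw [sS_orderEmb, sS_orderEmb, ih _ _ (card_sd I hI p) (card_sd J hJ l), orderEmb_sd,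
        orderEmb_sd, Matrix.submatrix_submatrix, Matrix.submatrix_apply, pow_add]
      ring
    simp only [this]
    simp [Nat.factorial_succ]
    ring

theorem dpow_top (h : Matrix (Fin n) (Fin n) ℝ) :
    dpow (ofMatrix h) n univ univ = (n.factorial : ℝ) * h.det := by
  rw [dpow_det h n univ univ (by simp) (by simp)]
  have : ⇑((univ : Finset (Fin n)).orderEmbOfFin (by simp : (univ : Finset (Fin n)).card = n)) = id := by
    symm
    exact Finset.orderEmbOfFin_unique _ (by simp) strictMono_id
  rw [this]
  simp

theorem hstar_empty (a : DForm n) : hstar a ∅ ∅ = a univ univ := by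
  simp [hstar, sS_empty_right]

theorem sCof_zero (h : Matrix (Fin n) (Fin n) ℝ) (k : ℕ) (hk : k ≤ n) :
    sCof h 0 k ∅ ∅ = sInv h k := by
  have key : h.charpoly = ∑ m ∈ Finset.range (n + 1),
      Polynomial.C ((-1 : ℝ) ^ m * sCof h 0 m ∅ ∅) * Polynomial.X ^ (n - m) := by
    apply Polynomial.funext
    intro t
    have h1 := congrFun (congrFun (part_i h 0 (Nat.zero_le _) t) ∅) ∅
    simp only [Nat.sub_zero, Pi.smul_apply, hstar_empty, dpow_top, Finset.sum_apply,
      smul_eq_mul] at h1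
    rw [inv_mul_cancel_left₀ (by exact_mod_cast Nat.factorial_ne_zero n)] at h1
    rw [Matrix.eval_charpoly]
    have h2 : Matrix.scalar (Fin n) t - h = -(h - t • 1) := by
      rw [neg_sub, Matrix.smul_one_eq_diagonal]; rfl
    rw [h2, Matrix.det_neg, h1, Fintype.card_fin, Polynomial.eval_finset_sum, Finset.mul_sum]
    refine Finset.sum_congr rfl fun m hm => ?_
    have hm : m ≤ n := by simpa [Nat.lt_succ_iff] using hm
    simp only [Polynomial.eval_mul, Polynomial.eval_C, Polynomial.eval_pow, Polynomial.eval_X]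
    have h3 : (-1 : ℝ) ^ n * (-1) ^ (n - m) = (-1) ^ m := by
      obtain ⟨d, rfl⟩ := Nat.exists_eq_add_of_le hm
      rw [Nat.add_sub_cancel_left, pow_add, mul_assoc, ← mul_pow]
      simp
    rw [← h3]; ring
  unfold sInv
  rw [key, Polynomial.finset_sum_coeff, Finset.sum_eq_single k]
  · rw [Polynomial.coeff_C_mul_X_pow, if_pos rfl, ← mul_assoc, ← mul_pow]
    simp
  · intro m hm hne
    have hm : m ≤ n := by simpa [Nat.lt_succ_iff] using hm
    rw [Polynomial.coeff_C_mul_X_pow, if_neg (by omega)]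
  · intro hc
    simp at hc; omega

theorem part_ii (h : Matrix (Fin n) (Fin n) ℝ) (q r : ℕ) (hr2 : r + q ≤ n) :
    (((q + r).factorial : ℝ) / (q.factorial : ℝ)) * sInv h (q + r) =
      dinner (sCof h r q) (dpow (ofMatrix h) r) := by
  rw [← sCof_zero h (q + r) (by omega)]
  unfold sCof
  rw [← hstar_smul, ← hstar_smul, dinner_hstar]
  have h1 : ∀ (t : ℝ) (a b : DForm n), wedge (t • a) b univ univ = t * wedge a b univ univ := by
    intro t a b
    simp only [wedge, Pi.smul_apply, smul_eq_mul, Finset.mul_sum]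
    refine Finset.sum_congr rfl fun A hA => Finset.sum_congr rfl fun B hB => ?_
    ring
  have h2 : wedge (wedge (dpow (gMetric n) (n - q - r)) (dpow (ofMatrix h) q)) (dpow (ofMatrix h) r)
      = wedge (dpow (gMetric n) (n - q - r)) (dpow (ofMatrix h) (q + r)) := by
    rw [wedge_assoc]
    congr 1
    rw [wedge_dpow_dpow, dpow_eq _ (q + r), pow_add]
  rw [h1, h2]
  rw [hstar_empty]
  simp only [Pi.smul_apply, smul_eq_mul]
  have e : n - (q + r) - 0 = n - q - r := by omega
  rw [e]
  have := Nat.factorial_ne_zero (q + r)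
  push_cast
  field_simp

theorem contr_hstar {a : DForm n} (ha : Bal a) : contr (hstar a) = hstar (wedge (gMetric n) a) := by
  funext I J
  have hg : Bal (wedge (gMetric n) a) := by
    rw [gMetric_eq]; exact (bal_ofMatrix _).wedge ha
  by_cases hIJ : I.card = J.card
  · unfold contr
    rw [hstar, gMetric_eq, wedge_ofMatrix, Finset.mul_sum]
    have : ∀ i ∈ Iᶜ, shuffleSign Iᶜ I * shuffleSign Jᶜ J * ∑ j ∈ Jᶜ, shuffleSign {i} (Iᶜ \ {i}) *
        shuffleSign {j} (Jᶜ \ {j}) * (1 : Matrix (Fin n) (Fin n) ℝ) i j * a (Iᶜ \ {i}) (Jᶜ \ {j}) =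
        if i ∈ Jᶜ then shuffleSign Iᶜ I * shuffleSign Jᶜ J * (shuffleSign {i} (Iᶜ \ {i}) *
        shuffleSign {i} (Jᶜ \ {i}) * a (Iᶜ \ {i}) (Jᶜ \ {i})) else 0 := by
      intro i _
      simp only [Matrix.one_apply, mul_ite, ite_mul, mul_one, mul_zero, zero_mul,
        Finset.sum_ite_eq]
    rw [Finset.sum_congr rfl this, ← Finset.sum_filter, ← Finset.sum_filter_ne_zero]
    simp only [← ite_not (p := _ ∨ _)]
    rw [Finset.sum_filter_ne_zero, ← Finset.sum_filter]
    refine Finset.sum_congr ?_ ?_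
    · ext x; simp
    · intro j hj
      simp only [Finset.mem_filter, Finset.mem_compl] at hj
      have key : ∀ K : Finset (Fin n), j ∉ K → shuffleSign {j} K *
          shuffleSign (insert j K)ᶜ (insert j K) = (-1 : ℝ) ^ (insert j K)ᶜ.card *
           (shuffleSign Kᶜ K * shuffleSign {j} (Kᶜ \ {j})) := by
        intro K hK
        have e1 : Kᶜ \ {j} = (insert j K)ᶜ := by
          ext x; simp; tauto
        have e2 : Kᶜ = (insert j K)ᶜ ∪ {j} := by
          rw [← e1, Finset.sdiff_union_of_subset (by simpa using hK)]
        have hd : Disjoint (insert j K)ᶜ {j} := by simp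
        rw [e1]
        have e3 : shuffleSign Kᶜ K = shuffleSign (insert j K)ᶜ K * shuffleSign {j} K := by
          conv_lhs => rw [e2]
          rw [sS_union_left hd]
        have e4 : shuffleSign (insert j K)ᶜ (insert j K) =
            shuffleSign (insert j K)ᶜ {j} * shuffleSign (insert j K)ᶜ K := by
          conv_lhs => rw [Finset.insert_eq j K]
          rw [sS_union_right _ (by simpa using hK), ← Finset.insert_eq]
        rw [e3, e4, sS_swap hd]
        simp
        ring
      have kI := key I hj.1
      have kJ := key J hj.2
      have hc : (insert j I)ᶜ.card = (insert j J)ᶜ.card := by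
        simp [Finset.card_compl, hj.1, hj.2, hIJ]
      have e1 : ∀ K : Finset (Fin n), Kᶜ \ {j} = (insert j K)ᶜ := by
        intro K
        ext x; simp; tauto
      rw [hc] at kI
      have hs : (-1 : ℝ) ^ (insert j J)ᶜ.card * (-1 : ℝ) ^ (insert j J)ᶜ.card = 1 := by
        rw [← mul_pow]; simp
      rw [e1] at kI kJ ⊢
      rw [e1]
      unfold hstar
      calc _ = (shuffleSign {j} I * shuffleSign (insert j I)ᶜ (insert j I)) *
            (shuffleSign {j} J * shuffleSign (insert j J)ᶜ (insert j J)) *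
              a (insert j I)ᶜ (insert j J)ᶜ := by ring
        _ = _ := by
          rw [kI, kJ]
          linear_combination (shuffleSign Iᶜ I * shuffleSign {j} (insert j I)ᶜ * (shuffleSign Jᶜ J * shuffleSign {j} (insert j J)ᶜ) * a (insert j I)ᶜ (insert j J)ᶜ) * hs
  · have h1 : hstar (wedge (gMetric n) a) I J = 0 := by
      unfold hstar
      have : wedge (gMetric n) a Iᶜ Jᶜ = 0 := by
        by_contra hc
        have := hg _ _ hc
        have h3 := Finset.card_compl_add_card I
        have h4 := Finset.card_compl_add_card J
        omega
      rw [this, mul_zero]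
    rw [h1]
    refine Finset.sum_eq_zero fun j _ => ?_
    split_ifs with hj
    · rfl
    · push Not at hj
      unfold hstar
      have : a (insert j I)ᶜ (insert j J)ᶜ = 0 := by
        by_contra hc
        have := ha _ _ hc
        have h3 := Finset.card_compl_add_card (insert j I)
        have h4 := Finset.card_compl_add_card (insert j J)
        rw [Finset.card_insert_of_notMem hj.1] at h3
        rw [Finset.card_insert_of_notMem hj.2] at h4
        omega
      rw [this]; ring

theorem contr_smul (t : ℝ) (a : DForm n) : contr (t • a) = t • contr a := by
  funext I J
  simp only [contr, Pi.smul_apply, smul_eq_mul, Finset.mul_sum]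
  refine Finset.sum_congr rfl fun j _ => ?_
  split_ifs
  · simp
  · ring

theorem part_iii (h : Matrix (Fin n) (Fin n) ℝ) (q r : ℕ) (hr1 : 1 ≤ r) (hr2 : r + q ≤ n) :
    contr (sCof h r q) = ((n - q - r + 1 : ℕ) : ℝ) • sCof h (r - 1) q := by
  unfold sCof
  have hb : Bal (gMetric n) := by rw [gMetric_eq]; exact bal_ofMatrix _
  rw [contr_smul, contr_hstar ((bal_dpow hb _).wedge (bal_dpow (bal_ofMatrix h) _)),
    ← wedge_assoc]
  have e : n - q - (r - 1) = n - q - r + 1 := by omega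
  rw [e, smul_smul]
  congr 1
  rw [Nat.factorial_succ]
  have := Nat.factorial_ne_zero (n - q - r)
  have h2 : ((n - q - r + 1 : ℕ) : ℝ) ≠ 0 := Nat.cast_ne_zero.2 (Nat.succ_ne_zero _)
  push_cast at h2 ⊢
  field_simp

end DForm

open DForm in
/-- For `0 ≤ q ≤ n` and `1 ≤ r ≤ n-q`:
(i) the `(r,m)`-cofactors are the coefficients of `*((h-λg)^{n-r}/(n-r)!)`,
(ii) the general Laplace expansion `((q+r)!/q!) s_{q+r}(h) = ⟨s_{(r,q)}(h), h^r⟩`,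
(iii) the general Newton identity `c s_{(r,q)}(h) = (n-q-r+1) s_{(r-1,q)}(h)`. -/
theorem statement8 (n : ℕ) (h : Matrix (Fin n) (Fin n) ℝ) (q r : ℕ)
    (hq : q ≤ n) (hr1 : 1 ≤ r) (hr2 : r + q ≤ n) :
    (∀ lam : ℝ,
      (((n - r).factorial : ℕ) : ℝ)⁻¹ • hstar (dpow (ofMatrix (h - lam • 1)) (n - r)) =
        ∑ m ∈ Finset.range (n - r + 1),
          ((-1 : ℝ) ^ (n - m - r) * lam ^ (n - m - r)) • sCof h r m) ∧
    (((q + r).factorial : ℝ) / (q.factorial : ℝ)) * sInv h (q + r) =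
      dinner (sCof h r q) (dpow (ofMatrix h) r) ∧
    contr (sCof h r q) = ((n - q - r + 1 : ℕ) : ℝ) • sCof h (r - 1) q := by
  exact ⟨fun lam => part_i h r (by omega) lam, part_ii h q r hr2, part_iii h q r hr1 hr2⟩
end
end

section
/- Let R be a symmetric (2,2)-double form satisfying the first Bianchi identity on an n-dimensional real inner product space (V,g) with n ≥ 4. Then Avez's formula holds: h₄(R) = |R|² − |cR|² + (1/4)|c²R|². -/
noncomputable section

open Finset

namespace DForm

set_option linter.unusedSimpArgs false
set_option linter.unusedVariables false

variable {n : ℕ}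

/-- Sign of a pair of indices. -/
def sg (a b : Fin n) : ℝ := if a < b then 1 else if b < a then -1 else 0

lemma sg_self (a : Fin n) : sg a a = 0 := by simp [sg]

lemma sg_swap (a b : Fin n) : sg b a = - sg a b := by
  unfold sg
  rcases lt_trichotomy a b with h | h | h
  · simp [h, h.not_gt]
  · simp [h]
  · simp [h, h.not_gt]

lemma sg_sq {a b : Fin n} (h : a ≠ b) : sg a b * sg a b = 1 := by
  unfold sg
  rcases lt_or_gt_of_ne h with h | h
  · simp [h]
  · simp [h, h.not_gt]

lemma shuffleSign_sq (A B : Finset (Fin n)) : shuffleSign A B * shuffleSign A B = 1 := by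
  unfold shuffleSign
  rw [← mul_pow]; simp

lemma shuffleSign_singleton {a b : Fin n} (h : a ≠ b) : shuffleSign {a} {b} = sg a b := by
  unfold shuffleSign sg
  rcases lt_or_gt_of_ne h with h | h
  · simp [Finset.filter_singleton, h, h.not_gt]
  · simp [Finset.filter_singleton, h, h.not_gt]

lemma shuffleSign_insert_right (A B : Finset (Fin n)) {b : Fin n} (h : b ∉ B) :
    shuffleSign A (insert b B) = shuffleSign A {b} * shuffleSign A B := by
  unfold shuffleSign
  rw [Finset.sum_insert h, pow_add]; simp

lemma shuffleSign_insert_left (A : Finset (Fin n)) {a b : Fin n} (h : a ∉ A) :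
    shuffleSign (insert a A) {b} = shuffleSign {a} {b} * shuffleSign A {b} := by
  unfold shuffleSign
  rw [← pow_add]
  simp only [Finset.sum_singleton]
  congr 1
  rw [Finset.filter_insert, Finset.filter_singleton]
  split_ifs with hb
  · rw [Finset.card_insert_of_notMem (by simp [h])]; simp [add_comm]
  · simp

lemma shuffleSign_pair {a b c d : Fin n} (hab : a ≠ b) (hac : a ≠ c) (had : a ≠ d)
    (hbc : b ≠ c) (hbd : b ≠ d) (hcd : c ≠ d) :
    shuffleSign {a, b} {c, d} = sg a c * sg b c * (sg a d * sg b d) := by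
  rw [shuffleSign_insert_right _ _ (by simpa using hcd),
    shuffleSign_insert_left _ (by simpa using hab), shuffleSign_insert_left _ (by simpa using hab),
    shuffleSign_singleton hac, shuffleSign_singleton hbc, shuffleSign_singleton had,
    shuffleSign_singleton hbd]

/-- Coefficients with signs. -/
def pr (f : Finset (Fin n) → Finset (Fin n) → ℝ) (a b c d : Fin n) : ℝ :=
  sg a b * sg c d * f {a, b} {c, d}

lemma pr_swap1 (f : Finset (Fin n) → Finset (Fin n) → ℝ) (a b c d : Fin n) :
    pr f b a c d = - pr f a b c d := by
  unfold pr; rw [sg_swap a b, Finset.pair_comm b a]; ring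

lemma pr_swap2 (f : Finset (Fin n) → Finset (Fin n) → ℝ) (a b c d : Fin n) :
    pr f a b d c = - pr f a b c d := by
  unfold pr; rw [sg_swap c d, Finset.pair_comm d c]; ring

lemma pr_self1 (f : Finset (Fin n) → Finset (Fin n) → ℝ) (a c d : Fin n) :
    pr f a a c d = 0 := by simp [pr, sg_self]

lemma pr_self2 (f : Finset (Fin n) → Finset (Fin n) → ℝ) (a b c : Fin n) :
    pr f a b c c = 0 := by simp [pr, sg_self]

/-- Alternating sum over (2,2)-shuffles. -/
def alt4 (F : Fin n → Fin n → Fin n → Fin n → ℝ) (i j k l : Fin n) : ℝ :=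
  F i j k l - F i k j l + F i l j k + F j k i l - F j l i k + F k l i j

/-- Total sign of a quadruple. -/
def eps (i j k l : Fin n) : ℝ := sg i j * sg i k * sg i l * sg j k * sg j l * sg k l

lemma eps_sq {a b c d : Fin n} (hab : a ≠ b) (hac : a ≠ c) (had : a ≠ d)
    (hbc : b ≠ c) (hbd : b ≠ d) (hcd : c ≠ d) : eps a b c d * eps a b c d = 1 := by
  have e : eps a b c d * eps a b c d = (sg a b * sg a b) * (sg a c * sg a c) * (sg a d * sg a d)
    * (sg b c * sg b c) * (sg b d * sg b d) * (sg c d * sg c d) := by unfold eps; ring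
  rw [e, sg_sq hab, sg_sq hac, sg_sq had, sg_sq hbc, sg_sq hbd, sg_sq hcd]; norm_num

lemma shuffle_term {a b c d : Fin n} (hab : a ≠ b) (hac : a ≠ c) (had : a ≠ d)
    (hbc : b ≠ c) (hbd : b ≠ d) (hcd : c ≠ d) (f : Finset (Fin n) → Finset (Fin n) → ℝ) :
    shuffleSign {a, b} {c, d} * f {a, b} {c, d} = eps a b c d * pr f a b c d := by
  rw [shuffleSign_pair hab hac had hbc hbd hcd]
  have e : eps a b c d * pr f a b c d = (sg a b * sg a b) * (sg c d * sg c d) *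
    (sg a c * sg b c * (sg a d * sg b d) * f {a, b} {c, d}) := by unfold eps pr; ring
  rw [e, sg_sq hab, sg_sq hcd]; ring

lemma sum_shuffle {i j k l : Fin n} (hij : i ≠ j) (hik : i ≠ k) (hil : i ≠ l)
    (hjk : j ≠ k) (hjl : j ≠ l) (hkl : k ≠ l) (f : Finset (Fin n) → Finset (Fin n) → ℝ)
    (hf : ∀ A C, f A C ≠ 0 → A.card = 2) :
    ∑ A ∈ ({i, j, k, l} : Finset (Fin n)).powerset,
      shuffleSign A ({i, j, k, l} \ A) * f A ({i, j, k, l} \ A)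
      = eps i j k l * alt4 (pr f) i j k l := by
  have h0 : ∀ A C, A.card ≠ 2 → f A C = 0 := fun A C h => by
    by_contra h'; exact h (hf A C h')
  have d1 : ({i, j, k, l} : Finset (Fin n)) \ {i, j} = {k, l} := by
    ext x; simp only [mem_sdiff, mem_insert, mem_singleton]; grind
  have d2 : ({i, j, k, l} : Finset (Fin n)) \ {i, k} = {j, l} := by
    ext x; simp only [mem_sdiff, mem_insert, mem_singleton]; grind
  have d3 : ({i, j, k, l} : Finset (Fin n)) \ {i, l} = {j, k} := by
    ext x; simp only [mem_sdiff, mem_insert, mem_singleton]; grind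
  have d4 : ({i, j, k, l} : Finset (Fin n)) \ {j, k} = {i, l} := by
    ext x; simp only [mem_sdiff, mem_insert, mem_singleton]; grind
  have d5 : ({i, j, k, l} : Finset (Fin n)) \ {j, l} = {i, k} := by
    ext x; simp only [mem_sdiff, mem_insert, mem_singleton]; grind
  have d6 : ({i, j, k, l} : Finset (Fin n)) \ {k, l} = {i, j} := by
    ext x; simp only [mem_sdiff, mem_insert, mem_singleton]; grind
  have key : ∀ φ : Finset (Fin n) → ℝ, (∀ A, A.card ≠ 2 → φ A = 0) →
      ∑ A ∈ ({i, j, k, l} : Finset (Fin n)).powerset, φ A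
        = φ {i, j} + φ {i, k} + φ {i, l} + φ {j, k} + φ {j, l} + φ {k, l} := by
    intro φ hφ
    have e : ({l} : Finset (Fin n)) = insert l ∅ := rfl
    rw [Finset.sum_powerset_insert (by simp [hij, hik, hil, hjk, hjl, hkl]), Finset.sum_powerset_insert (by simp [hij, hik, hil, hjk, hjl, hkl]),
      Finset.sum_powerset_insert (by simp [hij, hik, hil, hjk, hjl, hkl]), e, Finset.sum_powerset_insert (by simp),
      Finset.sum_powerset_insert (by simp [hij, hik, hil, hjk, hjl, hkl]), Finset.sum_powerset_insert (by simp [hij, hik, hil, hjk, hjl, hkl]),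
      Finset.sum_powerset_insert (by simp [hij, hik, hil, hjk, hjl, hkl]), Finset.sum_powerset_insert (by simp [hij, hik, hil, hjk, hjl, hkl]),
      Finset.sum_powerset_insert (by simp [hij, hik, hil, hjk, hjl, hkl]), Finset.sum_powerset_insert (by simp [hij, hik, hil, hjk, hjl, hkl]),
      Finset.sum_powerset_insert (by simp [hij, hik, hil, hjk, hjl, hkl]), Finset.sum_powerset_insert (by simp [hij, hik, hil, hjk, hjl, hkl]),
      Finset.sum_powerset_insert (by simp [hij, hik, hil, hjk, hjl, hkl]), Finset.sum_powerset_insert (by simp [hij, hik, hil, hjk, hjl, hkl]),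
      Finset.sum_powerset_insert (by simp [hij, hik, hil, hjk, hjl, hkl])]
    simp only [Finset.powerset_empty, Finset.sum_singleton, insert_empty_eq]
    have c0 := hφ ∅ (by simp)
    have c1 : ∀ a, φ {a} = 0 := fun a => hφ _ (by simp)
    have c3 : ∀ a b c, a ≠ b → a ≠ c → b ≠ c → φ {a, b, c} = 0 := fun a b c h1 h2 h3 =>
      hφ _ (by rw [Finset.card_eq_three.2 ⟨a, b, c, h1, h2, h3, rfl⟩]; norm_num)
    have c4 : φ {i, j, k, l} = 0 := hφ _ (by
      rw [Finset.card_insert_of_notMem (by simp [hij, hik, hil, hjk, hjl, hkl]),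
        Finset.card_eq_three.2 ⟨j, k, l, hjk, hjl, hkl, rfl⟩]; norm_num)
    rw [c0, c1, c1, c1, c1, c3 _ _ _ hij hik hjk, c3 _ _ _ hij hil hjl, c3 _ _ _ hik hil hkl,
      c3 _ _ _ hjk hjl hkl, c4]
    ring
  rw [key _ (fun A hA => by rw [h0 _ _ hA, mul_zero]), d1, d2, d3, d4, d5, d6,
    shuffle_term hij hik hil hjk hjl hkl, shuffle_term hik hij hil hjk.symm hkl hjl,
    shuffle_term hil hij hik hjl.symm hkl.symm hjk,
    shuffle_term hjk hij.symm hjl hik.symm hkl hil,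
    shuffle_term hjl hij.symm hjk hil.symm hkl.symm hik,
    shuffle_term hkl hik.symm hjk.symm hil.symm hjl.symm hij]
  unfold alt4 eps
  rw [sg_swap j k, sg_swap j l, sg_swap k l, sg_swap i j, sg_swap i k, sg_swap i l]
  ring

lemma alt4_zero (F : Fin n → Fin n → Fin n → Fin n → ℝ)
    (h1 : ∀ a b c d, F b a c d = - F a b c d) (h2 : ∀ a b c d, F a b d c = - F a b c d)
    (i j k l : Fin n) (h : i = j ∨ i = k ∨ i = l ∨ j = k ∨ j = l ∨ k = l) :
    alt4 F i j k l = 0 := by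
  have s1 : ∀ a c d, F a a c d = 0 := fun a c d => by linarith [h1 a a c d]
  have s2 : ∀ a b c, F a b c c = 0 := fun a b c => by linarith [h2 a b c c]
  unfold alt4
  rcases h with rfl | rfl | rfl | rfl | rfl | rfl
  · simp only [s1, s2]; ring
  · simp only [s1, s2]; linarith [h1 i j i l, h2 i l i j]
  · simp only [s1, s2]; linarith [h1 i j i k, h2 i j i k, h1 i k i j, h2 i k i j]
  · simp only [s1, s2]; ring
  · simp only [s1, s2]; linarith [h1 j k i j, h2 i j j k, h1 i j j k, h2 j k i j]
  · simp only [s1, s2]; ring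

/-- The second-slot alternation of `R · R`. -/
def PP (R : DForm n) (a b c d i j k l : Fin n) : ℝ :=
  alt4 (fun x y z t => pr R a b x y * pr R c d z t) i j k l

lemma wedge_four {i j k l : Fin n} (hij : i ≠ j) (hik : i ≠ k) (hil : i ≠ l)
    (hjk : j ≠ k) (hjl : j ≠ l) (hkl : k ≠ l) (R : DForm n) (hR : IsOfDeg R 2 2) :
    wedge R R {i, j, k, l} {i, j, k, l} =
      alt4 (fun a b c d => PP R a b c d i j k l) i j k l := by
  unfold wedge
  have e : ∀ A : Finset (Fin n), ∑ B ∈ ({i, j, k, l} : Finset (Fin n)).powerset,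
      shuffleSign A ({i, j, k, l} \ A) * shuffleSign B ({i, j, k, l} \ B) * R A B *
        R ({i, j, k, l} \ A) ({i, j, k, l} \ B)
      = shuffleSign A ({i, j, k, l} \ A) * ((fun A C => eps i j k l *
         alt4 (pr (fun B D => R A B * R C D)) i j k l) A ({i, j, k, l} \ A)) := by
    intro A
    beta_reduce
    rw [← sum_shuffle hij hik hil hjk hjl hkl (fun B D => R A B * R ({i, j, k, l} \ A) D),
      Finset.mul_sum]
    · refine Finset.sum_congr rfl fun B _ => ?_
      ring
    · intro B D h
      exact (hR A B (left_ne_zero_of_mul h)).2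
  rw [Finset.sum_congr rfl (fun A _ => e A), sum_shuffle hij hik hil hjk hjl hkl
      (fun A C => eps i j k l * alt4 (pr (fun B D => R A B * R C D)) i j k l)]
  · have hs := eps_sq hij hik hil hjk hjl hkl
    have e2 : ∀ a b c d, pr (fun A C => eps i j k l *
         alt4 (pr (fun B D => R A B * R C D)) i j k l) a b c d
         = eps i j k l * PP R a b c d i j k l := by
      intro a b c d
      simp only [PP, alt4, pr]; ring
    have e3 : pr (fun A C => eps i j k l *
         alt4 (pr (fun B D => R A B * R C D)) i j k l)
         = fun a b c d => eps i j k l * PP R a b c d i j k l := by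
      funext a b c d; exact e2 a b c d
    rw [e3]
    simp only [alt4]
    linear_combination (PP R i j k l i j k l - PP R i k j l i j k l + PP R i l j k i j k l
      + PP R j k i l i j k l - PP R j l i k i j k l + PP R k l i j i j k l) * hs
  · intro A C h
    by_contra hA
    apply h
    have : ∀ B, R A B = 0 := fun B => by
      by_contra h'; exact hA (hR A B h').1
    simp [alt4, pr, this]

lemma wedge_one (R : DForm n) : dpow R 1 = R := by
  funext I J
  show wedge R (dpow R 0) I J = R I J
  unfold wedge
  rw [Finset.sum_eq_single I, Finset.sum_eq_single J]
  · simp [dpow, shuffleSign]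
  · intro B hB hne
    have : J \ B ≠ ∅ := fun h => hne (Finset.Subset.antisymm (Finset.mem_powerset.1 hB)
      (Finset.sdiff_eq_empty_iff_subset.1 h))
    simp [dpow, this]
  · simp
  · intro A hA hne
    have : I \ A ≠ ∅ := fun h => hne (Finset.Subset.antisymm (Finset.mem_powerset.1 hA)
      (Finset.sdiff_eq_empty_iff_subset.1 h))
    simp [dpow, this]
  · simp

lemma contr_diag (ω : DForm n) (I : Finset (Fin n)) :
    contr ω I I = ∑ j, if j ∈ I then 0 else ω (insert j I) (insert j I) := by
  unfold contr
  refine Finset.sum_congr rfl fun j _ => ?_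
  simp only [or_self, shuffleSign_sq, one_mul]

lemma citer_four (ω : DForm n) (F : Fin n → Fin n → Fin n → Fin n → ℝ)
    (h0 : ∀ i j k l, (i = j ∨ i = k ∨ i = l ∨ j = k ∨ j = l ∨ k = l) → F i j k l = 0)
    (h1 : ∀ i j k l, i ≠ j → i ≠ k → i ≠ l → j ≠ k → j ≠ l → k ≠ l →
      ω {i, j, k, l} {i, j, k, l} = F i j k l) :
    toScalar (citer ω 4) = ∑ l, ∑ k, ∑ j, ∑ i, F i j k l := by
  simp only [toScalar, citer, contr_diag, Finset.notMem_empty, if_false, insert_empty_eq]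
  refine Finset.sum_congr rfl fun l _ => Finset.sum_congr rfl fun k _ => ?_
  by_cases hkl : k = l
  · simp [hkl, h0]
  rw [if_neg (by simpa using hkl)]
  refine Finset.sum_congr rfl fun j _ => ?_
  by_cases hj : j = k ∨ j = l
  · rw [if_pos (by simpa using hj), Finset.sum_eq_zero]
    intro i _; exact h0 _ _ _ _ (by tauto)
  rw [if_neg (by simpa using hj)]
  push Not at hj
  refine Finset.sum_congr rfl fun i _ => ?_
  by_cases hi : i = j ∨ i = k ∨ i = l
  · rw [if_pos (by simpa using hi), h0 _ _ _ _ (by tauto)]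
  rw [if_neg (by simpa using hi)]
  push Not at hi
  exact h1 _ _ _ _ hi.1 hi.2.1 hi.2.2 hj.1 hj.2 hkl

lemma contr_single (R : DForm n) (a b : Fin n) :
    contr R {a} {b} = ∑ j, pr R j a j b := by
  unfold contr
  refine Finset.sum_congr rfl fun j _ => ?_
  simp only [Finset.mem_singleton]
  split_ifs with h
  · rcases h with rfl | rfl <;> simp [pr, sg_self]
  · push Not at h
    rw [shuffleSign_singleton h.1, shuffleSign_singleton h.2]; rfl

lemma scalar_two (R : DForm n) : toScalar (citer R 2) = ∑ a, ∑ j, pr R j a j a := by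
  show contr (contr R) ∅ ∅ = _
  rw [contr_diag]
  simp only [Finset.notMem_empty, if_false, insert_empty_eq, contr_single]

lemma sum_card_one (φ : Finset (Fin n) → ℝ) (h : ∀ I, I.card ≠ 1 → φ I = 0) :
    ∑ I, φ I = ∑ a, φ {a} := by
  rw [← Finset.sum_image (s := univ) (g := fun a : Fin n => ({a} : Finset (Fin n))) (f := φ)
    (fun a _ b _ hab => by simpa using hab)]
  symm
  refine Finset.sum_subset (Finset.subset_univ _) fun I _ hI => h I fun hc => hI ?_
  obtain ⟨a, rfl⟩ := Finset.card_eq_one.1 hc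
  simp

lemma sum_card_two (φ : Finset (Fin n) → ℝ) (h : ∀ I, I.card ≠ 2 → φ I = 0) :
    ∑ a, ∑ b, sg a b * sg a b * φ {a, b} = 2 * ∑ I, φ I := by
  have e : ∀ a b : Fin n, sg a b * sg a b * φ {a, b}
      = ∑ I, if a ≠ b ∧ I = {a, b} then φ I else 0 := by
    intro a b
    by_cases hab : a = b
    · subst hab; simp [sg_self]
    · simp [hab, sg_sq hab]
  simp only [e]
  have : ∀ I : Finset (Fin n), ∑ a, ∑ b, (if a ≠ b ∧ I = {a, b} then φ I else 0) = 2 * φ I := by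
    intro I
    by_cases hc : I.card = 2
    · obtain ⟨x, y, hxy, rfl⟩ := Finset.card_eq_two.1 hc
      rw [← Finset.sum_product', ← Finset.sum_filter]
      have : ((univ ×ˢ univ : Finset (Fin n × Fin n)).filter
          fun p => p.1 ≠ p.2 ∧ ({x, y} : Finset (Fin n)) = {p.1, p.2}) = {(x, y), (y, x)} := by
        ext ⟨a, b⟩
        simp only [mem_filter, mem_product, mem_univ, true_and, mem_insert, mem_singleton,
          Prod.mk.injEq]
        constructor
        · rintro ⟨hab, hI⟩
          have ha : a ∈ ({x, y} : Finset (Fin n)) := by rw [hI]; simp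
          have hb : b ∈ ({x, y} : Finset (Fin n)) := by rw [hI]; simp
          simp only [mem_insert, mem_singleton] at ha hb
          grind
        · rintro (⟨rfl, rfl⟩ | ⟨rfl, rfl⟩)
          · exact ⟨hxy, rfl⟩
          · exact ⟨hxy.symm, Finset.pair_comm _ _⟩
      rw [this, Finset.sum_const, Finset.card_pair (by simp [hxy])]
      simp
    · simp [h I hc]
  rw [Finset.mul_sum, ← Finset.sum_congr rfl (fun I _ => this I)]
  rw [Finset.sum_congr rfl (fun a _ => Finset.sum_comm), Finset.sum_comm]

lemma dinner_self (R : DForm n) (hR : IsOfDeg R 2 2) :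
    ∑ a, ∑ b, ∑ c, ∑ d, pr R a b c d * pr R a b c d = 4 * dinner R R := by
  unfold dinner
  have h1 : ∀ I J, J.card ≠ 2 → R I J * R I J = 0 := fun I J h => by
    have : R I J = 0 := by by_contra h'; exact h (hR I J h').2
    rw [this, mul_zero]
  have h2 : ∀ I, I.card ≠ 2 → ∑ J, R I J * R I J = 0 := fun I h => by
    refine Finset.sum_eq_zero fun J _ => ?_
    have : R I J = 0 := by by_contra h'; exact h (hR I J h').1
    rw [this, mul_zero]
  have e := sum_card_two (fun I => ∑ J, R I J * R I J) h2
  have e' : ∀ a b : Fin n, ∑ c, ∑ d, pr R a b c d * pr R a b c d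
      = 2 * (sg a b * sg a b * ∑ J, R {a, b} J * R {a, b} J) := by
    intro a b
    have := sum_card_two (fun J => R {a, b} J * R {a, b} J) (h1 {a, b})
    calc _ = sg a b * sg a b * ∑ c, ∑ d, sg c d * sg c d * (R {a, b} {c, d} * R {a, b} {c, d}) := by
            simp only [Finset.mul_sum, pr]
            refine Finset.sum_congr rfl fun c _ => Finset.sum_congr rfl fun d _ => by ring
      _ = _ := by rw [this]; ring
  simp only [e', ← Finset.mul_sum]
  simp only [Finset.mul_sum] at e ⊢
  simp only [← Finset.mul_sum] at e ⊢
  rw [e]; ring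

lemma dinner_contr (R : DForm n) (hR : IsOfDeg R 2 2) :
    dinner (contr R) (contr R)
      = ∑ a, ∑ b, (∑ j, pr R j a j b) * (∑ j, pr R j a j b) := by
  have h1 : ∀ I J, I.card ≠ 1 → contr R I J = 0 := by
    intro I J h
    refine Finset.sum_eq_zero fun j _ => ?_
    split_ifs with hj
    · rfl
    · push Not at hj
      have : R (insert j I) (insert j J) = 0 := by
        by_contra h'
        have := (hR _ _ h').1
        rw [Finset.card_insert_of_notMem hj.1] at this
        omega
      rw [this, mul_zero]
  have h2 : ∀ I J, J.card ≠ 1 → contr R I J = 0 := by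
    intro I J h
    refine Finset.sum_eq_zero fun j _ => ?_
    split_ifs with hj
    · rfl
    · push Not at hj
      have : R (insert j I) (insert j J) = 0 := by
        by_contra h'
        have := (hR _ _ h').2
        rw [Finset.card_insert_of_notMem hj.2] at this
        omega
      rw [this, mul_zero]
  unfold dinner
  rw [sum_card_one _ (fun I hI => Finset.sum_eq_zero fun J _ => by rw [h1 I J hI, mul_zero])]
  refine Finset.sum_congr rfl fun a _ => ?_
  rw [sum_card_one _ (fun J hJ => by rw [h2 _ J hJ, mul_zero])]
  simp only [contr_single]

lemma PP_eq (R : DForm n) (i j k l : Fin n) :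
    alt4 (fun a b c d => PP R a b c d i j k l) i j k l
      = PP R i j k l i j k l + PP R i k j l i k j l + PP R i l j k i l j k
        + PP R j k i l j k i l + PP R j l i k j l i k + PP R k l i j k l i j := by
  simp only [alt4, PP]
  simp only [fun a b => pr_swap2 R a b j k, fun a b => pr_swap2 R a b i j,
    fun a b => pr_swap2 R a b i k, fun a b => pr_swap2 R a b i l,
    fun a b => pr_swap2 R a b j l, fun a b => pr_swap2 R a b k l]
  ring

lemma s12 (F : Fin n → Fin n → Fin n → Fin n → ℝ) :
    ∑ a, ∑ b, ∑ c, ∑ d, F a b c d = ∑ a, ∑ b, ∑ c, ∑ d, F b a c d := Finset.sum_comm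

lemma s23 (F : Fin n → Fin n → Fin n → Fin n → ℝ) :
    ∑ a, ∑ b, ∑ c, ∑ d, F a b c d = ∑ a, ∑ b, ∑ c, ∑ d, F a c b d :=
  Finset.sum_congr rfl fun _ _ => Finset.sum_comm

lemma s34 (F : Fin n → Fin n → Fin n → Fin n → ℝ) :
    ∑ a, ∑ b, ∑ c, ∑ d, F a b c d = ∑ a, ∑ b, ∑ c, ∑ d, F a b d c :=
  Finset.sum_congr rfl fun _ _ => Finset.sum_congr rfl fun _ _ => Finset.sum_comm

lemma sum_PP (Q : Fin n → Fin n → Fin n → Fin n → ℝ) :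
    ∑ l, ∑ k, ∑ j, ∑ i, (Q i j k l + Q i k j l + Q i l j k + Q j k i l + Q j l i k + Q k l i j)
      = 6 * ∑ i, ∑ j, ∑ k, ∑ l, Q i j k l := by
  have rev : ∀ F : Fin n → Fin n → Fin n → Fin n → ℝ,
      ∑ l, ∑ k, ∑ j, ∑ i, F i j k l = ∑ i, ∑ j, ∑ k, ∑ l, F i j k l := fun F => by
    rw [s12 (fun l k j i => F i j k l), s23 (fun l k j i => F i j l k),
      s34 (fun l k j i => F i k l j), s12 (fun l k j i => F j k l i),
      s23 (fun l k j i => F j l k i), s12 (fun l k j i => F k l j i)]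
  rw [rev]
  simp only [Finset.sum_add_distrib]
  have e2 := s23 Q
  have e3 := (s34 Q).trans (s23 fun a b c d => Q a b d c)
  have e3' : ∑ i, ∑ j, ∑ k, ∑ l, Q i l j k = ∑ i, ∑ j, ∑ k, ∑ l, Q i j k l := by
    rw [s34 (fun i j k l => Q i l j k), s23 (fun i j k l => Q i k j l)]
  have e4 : ∑ i, ∑ j, ∑ k, ∑ l, Q j k i l = ∑ i, ∑ j, ∑ k, ∑ l, Q i j k l := by
    rw [s12 (fun i j k l => Q j k i l), s23 (fun i j k l => Q i k j l)]
  have e5 : ∑ i, ∑ j, ∑ k, ∑ l, Q j l i k = ∑ i, ∑ j, ∑ k, ∑ l, Q i j k l := by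
    rw [s12 (fun i j k l => Q j l i k), s34 (fun i j k l => Q i l j k),
      s23 (fun i j k l => Q i k j l)]
  have e6 : ∑ i, ∑ j, ∑ k, ∑ l, Q k l i j = ∑ i, ∑ j, ∑ k, ∑ l, Q i j k l := by
    rw [s23 (fun i j k l => Q k l i j), s12 (fun i j k l => Q j l i k),
      s34 (fun i j k l => Q i l j k), s23 (fun i j k l => Q i k j l)]
  rw [← e2, e3', e4, e5, e6]; ring

lemma sum_Q (R : DForm n) (hsym : IsSym R) :
    ∑ i, ∑ j, ∑ k, ∑ l, PP R i j k l i j k l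
      = (∑ a, ∑ j, pr R j a j a) ^ 2
        - 4 * ∑ a, ∑ b, (∑ j, pr R j a j b) * (∑ j, pr R j a j b)
        + ∑ a, ∑ b, ∑ c, ∑ d, pr R a b c d * pr R a b c d := by
  have ps : ∀ a b c d, pr R c d a b = pr R a b c d := fun a b c d => by
    unfold pr; rw [hsym]; ring
  have q1 : ∑ i, ∑ j, ∑ k, ∑ l, pr R i j i j * pr R k l k l
      = (∑ a, ∑ j, pr R j a j a) ^ 2 := by
    rw [sq]
    conv_rhs => rw [Finset.sum_comm]
    simp only [Finset.sum_mul, Finset.mul_sum]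
    refine Finset.sum_congr rfl fun a _ => Finset.sum_congr rfl fun b _ =>
      Finset.sum_congr rfl fun c _ => Finset.sum_congr rfl fun d _ => mul_comm _ _
  have q6 : ∑ i, ∑ j, ∑ k, ∑ l, pr R i j k l * pr R k l i j
      = ∑ a, ∑ b, ∑ c, ∑ d, pr R a b c d * pr R a b c d := by
    refine Finset.sum_congr rfl fun a _ => Finset.sum_congr rfl fun b _ =>
      Finset.sum_congr rfl fun c _ => Finset.sum_congr rfl fun d _ => by rw [ps a b c d]
  -- the Ricci-type sums
  have q0 : ∑ a, ∑ b, (∑ j, pr R j a j b) * (∑ j, pr R j a j b)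
      = ∑ a, ∑ b, ∑ p, ∑ q, pr R p a p b * pr R q a q b := by
    simp only [Finset.sum_mul, Finset.mul_sum]
    exact Finset.sum_congr rfl fun a _ => Finset.sum_congr rfl fun b _ => Finset.sum_comm
  have pt : ∀ i j k l, PP R i j k l i j k l = pr R i j i j * pr R k l k l
      - pr R i j i k * pr R l j l k - pr R i j i l * pr R k j k l
      - pr R j i j k * pr R l i l k - pr R j i j l * pr R k i k l
      + pr R i j k l * pr R k l i j := by
    intro i j k l
    have a1 : pr R k l j l = pr R l j l k := by
      rw [pr_swap1 R l k, pr_swap2 R l k l j, ps l j l k]; ring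
    have a2 : pr R k l j k = - pr R k j k l := by
      rw [pr_swap2 R k l k j, ps k j k l]
    have a3 : pr R k l i l = pr R l i l k := by
      rw [pr_swap1 R l k, pr_swap2 R l k l i, ps l i l k]; ring
    have a4 : pr R k l i k = - pr R k i k l := by
      rw [pr_swap2 R k l k i, ps k i k l]
    simp only [PP, alt4]
    rw [a1, a2, a3, a4, pr_swap1 R j i j k, pr_swap1 R j i j l]
    ring
  have t1 : ∑ i, ∑ j, ∑ k, ∑ l, pr R i j i k * pr R l j l k
      = ∑ a, ∑ b, ∑ p, ∑ q, pr R p a p b * pr R q a q b := by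
    rw [s12, s23]
  have t2 : ∑ i, ∑ j, ∑ k, ∑ l, pr R i j i l * pr R k j k l
      = ∑ a, ∑ b, ∑ p, ∑ q, pr R p a p b * pr R q a q b := by
    rw [s34, t1]
  have t3 : ∑ i, ∑ j, ∑ k, ∑ l, pr R j i j k * pr R l i l k
      = ∑ a, ∑ b, ∑ p, ∑ q, pr R p a p b * pr R q a q b := by
    rw [s23]
  have t4 : ∑ i, ∑ j, ∑ k, ∑ l, pr R j i j l * pr R k i k l
      = ∑ a, ∑ b, ∑ p, ∑ q, pr R p a p b * pr R q a q b := by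
    rw [s34, t3]
  simp only [pt, Finset.sum_add_distrib, Finset.sum_sub_distrib]
  rw [q1, q6, q0, t1, t2, t3, t4]
  ring

lemma alt4_PP_zero (R : DForm n) (i j k l : Fin n)
    (h : i = j ∨ i = k ∨ i = l ∨ j = k ∨ j = l ∨ k = l) :
    alt4 (fun a b c d => PP R a b c d i j k l) i j k l = 0 := by
  apply alt4_zero _ _ _ _ _ _ _ h
  · intro a b c d
    simp only [PP, alt4, pr_swap1 R a b]; ring
  · intro a b c d
    simp only [PP, alt4, pr_swap1 R c d]; ring

end DForm

open DForm in
/-- Avez's formula: `h₄(R) = |R|² - |cR|² + (1/4)|c²R|²` for `n ≥ 4`. -/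
theorem statement13 (n : ℕ) (R : DForm n) (hsym : IsSym R) (hb : Bianchi2 R)
    (hgr : IsOfDeg R 2 2) (hn : 4 ≤ n) :
    toScalar (citer (dpow R 2) 4) / ((Nat.factorial 4 : ℕ) : ℝ) =
      dinner R R - dinner (contr R) (contr R)
        + (1 / 4) * (toScalar (citer R 2)) ^ 2 := by
  have h2 : dpow R 2 = wedge R R := by
    show wedge R (dpow R 1) = _
    rw [wedge_one]
  rw [h2, citer_four _ (fun i j k l => alt4 (fun a b c d => PP R a b c d i j k l) i j k l)
    (alt4_PP_zero R) (fun i j k l h1 h2 h3 h4 h5 h6 => wedge_four h1 h2 h3 h4 h5 h6 R hgr)]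
  simp only [PP_eq]
  rw [sum_PP (fun i j k l => PP R i j k l i j k l), sum_Q R hsym, dinner_self R hgr,
    ← dinner_contr R hgr, ← scalar_two]
  norm_num [Nat.factorial]
  ring
end
end
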